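/- arXiv:1407.6077 — 2 statements merged into one kernel-verified Lean document; each statement's English description precedes it below -/
import Mathlib

section
/- Let X = (x_{ij}) be an m×n matrix with positive real entries, let ȳ_{i,j,k} be the associated noncrossing-lattice-path generating sums, let rect(i,j) := Π_{r ≤ i, s ≤ j} x_{rs}, and define ỹ_{i,j,k} := ȳ_{i,j,k} / rect(i,j). Then: (1) ỹ_{i,j,0} = 1/rect(i,j) for all 1 ≤ i ≤ m, 1 ≤ j ≤ n; (2) ỹ_{i,j,min(i,j)} = 1 for all 1 ≤ i ≤ m, 1 ≤ j ≤ n; and (3) for all 2 ≤ i ≤ m, 2 ≤ j ≤ n and 1 ≤ k ≤ min(i,j) − 1, the octahedron recurrence holds: ỹ_{i,j,k} · ỹ_{i−1,j−1,k−1} = ỹ_{i−1,j,k} · ỹ_{i,j−1,k−1} + ỹ_{i−1,j,k−1} · ỹ_{i,j−1,k}. -/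
/-- One step of a lattice path: exactly one coordinate increases by exactly `1`. -/
def GridStep (u v : ℕ × ℕ) : Prop := v = (u.1 + 1, u.2) ∨ v = (u.1, u.2 + 1)

/-- `p` is a lattice path in `{1,…,m} × {1,…,n}` from `src` to `tgt`. -/
def IsGridPath (m n : ℕ) (src tgt : ℕ × ℕ) (p : List (ℕ × ℕ)) : Prop :=
  p.head? = some src ∧ p.getLast? = some tgt ∧
  (∀ v ∈ p, 1 ≤ v.1 ∧ v.1 ≤ m ∧ 1 ≤ v.2 ∧ v.2 ≤ n) ∧
  List.Chain' GridStep p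

/-- A tuple of pairwise vertex-disjoint lattice paths in `{1,…,m} × {1,…,n}`, the `l`-th one
going from the `l`-th entry of `src` to the `l`-th entry of `tgt`. -/
structure NCTuple (m n : ℕ) (src tgt : List (ℕ × ℕ)) where
  path : List (List (ℕ × ℕ))
  hlen : path.length = src.length
  hlen' : path.length = tgt.length
  valid : ∀ l, l < path.length →
    IsGridPath m n (src.getD l (0, 0)) (tgt.getD l (0, 0)) (path.getD l [])
  disj : ∀ l l', l < path.length → l' < path.length → l ≠ l' →
    ∀ v ∈ path.getD l [], v ∉ path.getD l' []

/-- `ȳ_{i,j,k}`: the sum over all `k`-tuples `(π_1,…,π_k)` of pairwise vertex-disjoint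
lattice paths, with `π_l` going from `(1,l)` to `(i, j-k+l)`, of
`Π_l Π_{(r,s) ∈ π_l} x_{r,s}`. -/
noncomputable def ybar (m n : ℕ) (x : ℕ → ℕ → ℝ) (i j k : ℕ) : ℝ :=
  ∑ᶠ T : NCTuple m n ((List.range k).map fun l => (1, l + 1))
      ((List.range k).map fun l => (i, j - k + (l + 1))),
    (T.path.map fun p => (p.map fun v => x v.1 v.2).prod).prod

/-- `rect(i,j) = Π_{r ≤ i, s ≤ j} x_{rs}`. -/
noncomputable def rectProd (x : ℕ → ℕ → ℝ) (i j : ℕ) : ℝ :=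
  ∏ r ∈ Finset.Icc 1 i, ∏ s ∈ Finset.Icc 1 j, x r s

/-- `ỹ_{i,j,k} := ȳ_{i,j,k} / rect(i,j)`. -/
noncomputable def ytilde (m n : ℕ) (x : ℕ → ℕ → ℝ) (i j k : ℕ) : ℝ :=
  ybar m n x i j k / rectProd x i j


def vv (x : ℕ → ℕ → ℝ) : ℕ → ℕ → ℕ → ℝ
  | 0, c, s => if c = s then 1 else 0
  | _ + 1, 0, _ => 0
  | r + 1, c + 1, s => x (r + 1) (c + 1) * (vv x r (c + 1) s + vv x (r + 1) c s)

/-- minor of path weights, columns `a+1..a+k` in row `i`. -/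
noncomputable def EE (x : ℕ → ℕ → ℝ) (i a k : ℕ) : ℝ :=
  Matrix.det (Matrix.of fun l t : Fin k => vv x i (a + (l + 1)) (t + 1))

open Matrix in
theorem plucker {N : ℕ} (M : Matrix (Fin N) (Fin N) ℝ) (p q : Fin N) (hpq : p ≠ q)
    (w e : Fin N → ℝ) :
    M.det * ((M.updateRow p w).updateRow q e).det =
      (M.updateRow p w).det * (M.updateRow q e).det +
      (M.updateRow q w).det * ((M.updateRow p (M q)).updateRow q e).det := by
  have h := Matrix.mulVec_cramer Mᵀ w
  have hw : M.det • w = ∑ i, (M.updateRow i w).det • M i := by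
    rw [det_transpose] at h
    rw [← h]
    ext t
    simp [Matrix.mulVec, dotProduct, Matrix.cramer_transpose_apply, mul_comm]
  have hlin : ∀ y, ((M.updateRow p y).updateRow q e).det =
      ((M.updateRow q e).updateRow p y).det := by
    intro y
    rw [Matrix.updateRow_comm _ hpq]
  let f : (Fin N → ℝ) →ₗ[ℝ] ℝ :=
    { toFun := fun y => ((M.updateRow q e).updateRow p y).det
      map_add' := fun y z => by rw [Matrix.det_updateRow_add]
      map_smul' := fun c y => by rw [Matrix.det_updateRow_smul]; rfl }
  have hf : ∀ y, ((M.updateRow p y).updateRow q e).det = f y := hlin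
  rw [hf, hf, ← smul_eq_mul, ← map_smul, hw, map_sum, Finset.sum_eq_add p q hpq]
  · simp only [map_smul, smul_eq_mul]
    congr 2
    rw [← hf, Matrix.updateRow_eq_self]
  · intro c _ hc
    rw [map_smul]
    have : f (M c) = 0 := by
      refine Matrix.det_zero_of_row_eq (i := p) (j := c) hc.1.symm ?_
      simp [Matrix.updateRow_ne hc.1, Matrix.updateRow_ne hc.2]
    rw [this, smul_zero]
  · simp
  · simp

theorem det_last {N : ℕ} (M : Matrix (Fin (N+1)) (Fin (N+1)) ℝ)
    (h : ∀ t, M (Fin.last N) t = if t = Fin.last N then 1 else 0) :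
    M.det = Matrix.det (Matrix.of fun l t : Fin N => M l.castSucc t.castSucc) := by
  rw [Matrix.det_succ_row M (Fin.last N), Finset.sum_eq_single (Fin.last N)]
  · rw [h]
    simp [Matrix.submatrix, ← two_mul]
  · intro b _ hb
    rw [h]; simp [hb]
  · simp

theorem det_rot {k : ℕ} (A : Matrix (Fin (k+1)) (Fin (k+1)) ℝ) :
    Matrix.det (Matrix.of fun l t : Fin (k+1) => A (finRotate (k+1) l) t) = (-1)^k * A.det := by
  have := Matrix.det_permute (finRotate (k+1)) A
  rw [sign_finRotate] at this
  simp only [Nat.add_sub_cancel, Units.val_pow_eq_pow_val, Units.val_neg, Units.val_one,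
    Int.cast_pow, Int.cast_neg, Int.cast_one] at this
  rw [← this]
  rfl

/-- bidiagonal reduction -/
theorem EE_succ (x : ℕ → ℕ → ℝ) (i a k : ℕ) : EE x (i+1) a (k+1) =
    (∏ t : Fin k, x (i+1) (a + t + 2)) * Matrix.det (Matrix.of fun l t : Fin (k+1) =>
      if l = 0 then vv x (i+1) (a+1) (t+1) else vv x i (a + (l+1)) (t+1)) := by
  have h2 := Matrix.det_mul_column (fun l : Fin (k+1) => if l = 0 then 1 else x (i+1) (a+l+1))
    (Matrix.of fun l t : Fin (k+1) =>
      if l = 0 then vv x (i+1) (a+1) (t+1) else vv x i (a + (l+1)) (t+1))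
  rw [Fin.prod_univ_succ] at h2
  simp only [if_true, one_mul, Fin.succ_ne_zero, if_false, Fin.val_succ] at h2
  have e : ∀ t : Fin k, a + t + 2 = a + (t+1) + 1 := by intro t; ring
  simp only [e]
  rw [← h2, EE]
  apply Matrix.det_eq_of_forall_row_eq_smul_add_pred (fun l => x (i+1) (a + (l+1) + 1))
  · intro j; simp
  · intro l j
    simp only [Matrix.of_apply, Fin.succ_ne_zero, if_false, Fin.val_succ, Fin.val_castSucc]
    rw [show a + ((l:ℕ) + 1 + 1) = (a + (l+1)) + 1 by ring, vv]
    ring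

theorem octa (x : ℕ → ℕ → ℝ) (i a k : ℕ) :
    EE x (i+1) (a+1) (k+1) * EE x i (a+1) k = x (i+1) (a+1+k+1) *
      (EE x i (a+1) (k+1) * EE x (i+1) (a+1) k + EE x i (a+2) k * EE x (i+1) a (k+1)) := by
  rcases k with _ | k
  · simp [EE, vv]
  set M : Matrix (Fin (k+2)) (Fin (k+2)) ℝ := Matrix.of fun l t : Fin (k+2) =>
      if l = 0 then vv x (i+1) (a+1+1) (t+1) else vv x i (a + 1+ (l+1)) (t+1) with hM
  set w : Fin (k+2) → ℝ := fun t => vv x i (a+2) (t+1) with hw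
  set e : Fin (k+2) → ℝ := fun t => if t = Fin.last _ then 1 else 0 with he
  set X : ℝ := ∏ t : Fin k, x (i+1) (a + 1 + t + 2) with hX
  have hl0 : (Fin.last (k+1)) ≠ 0 := Fin.last_pos.ne'
  have key := plucker M 0 (Fin.last _) hl0.symm w e
  have h1 : EE x (i+1) (a+1) (k+2) = X * x (i+1) (a+1+(k+1)+1) * M.det := by
    rw [EE_succ, Fin.prod_univ_castSucc]
    simp [hX, hM]; left; left; congr 1
  have h2 : EE x i (a+1) (k+1) = ((M.updateRow 0 w).updateRow (Fin.last _) e).det := by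
    rw [det_last]
    · unfold EE; congr 1; ext l t
      rw [Matrix.of_apply, Matrix.of_apply, Matrix.updateRow_ne (Fin.castSucc_lt_last l).ne]
      rcases eq_or_ne l 0 with rfl | h
      · simp [hw]
      · rw [Matrix.updateRow_ne (by simpa using h)]
        simp [hM, h]
    · intro t; simp [he]
  have h3 : EE x i (a+1) (k+2) = (M.updateRow 0 w).det := by
    unfold EE; congr 1; ext l t
    rcases eq_or_ne l 0 with rfl | h
    · simp [hw]
    · rw [Matrix.updateRow_ne h]
      simp [hM, h]
  have h4 : EE x (i+1) (a+1) (k+1) = X * (M.updateRow (Fin.last _) e).det := by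
    rw [EE_succ, det_last (M.updateRow _ _)]
    · congr 2; ext l t
      rw [Matrix.of_apply, Matrix.of_apply, Matrix.updateRow_ne (Fin.castSucc_lt_last l).ne]
      simp [hM]
    · intro t; simp [he]
  have h5 : EE x i (a+2) (k+1) = (-1)^k *
      ((M.updateRow 0 (M (Fin.last _))).updateRow (Fin.last _) e).det := by
    rw [det_last]
    · rw [← det_rot]
      unfold EE; congr 1; ext l t
      rw [Matrix.of_apply, Matrix.of_apply, Matrix.of_apply,
        Matrix.updateRow_ne (Fin.castSucc_lt_last _).ne]
      rcases Fin.eq_castSucc_or_eq_last l with ⟨l, rfl⟩ | rfl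
      · rw [finRotate_apply, Fin.coeSucc_eq_succ, Matrix.updateRow_ne]
        · simp only [hM, Matrix.of_apply]
          rw [if_neg]
          · simp only [Fin.val_castSucc, Fin.val_succ]; congr 1; ring
          · simp [Fin.ext_iff]
        · simp [Fin.ext_iff]
      · rw [finRotate_last]
        simp [hM]; congr 1; ring
    · intro t; simp [he]
  have h6 : EE x (i+1) a (k+2) = X * ((-1)^k * (M.updateRow (Fin.last _) w).det) := by
    rw [EE_succ, Fin.prod_univ_succ]
    set Q : Matrix (Fin (k+2)) (Fin (k+2)) ℝ := Matrix.of fun l t : Fin (k+2) =>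
      if l = 0 then vv x (i+1) (a+1) (t+1) else vv x i (a + (l+1)) (t+1) with hQ
    have q1 : (Q.updateRow 0 (fun t => vv x (i+1) (a+2) (t+1))).det = x (i+1) (a+2) * Q.det := by
      rw [← Matrix.det_updateRow_add_self Q (i := 0) (j := 1) (by simp),
        ← Matrix.det_updateRow_smul]
      congr 2
      ext t
      simp [hQ, vv]
      left; ring
    have q2 := det_rot (Q.updateRow 0 (fun t => vv x (i+1) (a+2) (t+1)))
    have q3 := Matrix.det_permute (Equiv.swap 0 (Fin.last (k+1))) (M.updateRow (Fin.last _) w)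
    rw [Equiv.Perm.sign_swap hl0.symm] at q3
    have q4 : (M.updateRow (Fin.last (k+1)) w).submatrix (Equiv.swap 0 (Fin.last (k+1))) id =
        Matrix.of fun l t : Fin (k+2) =>
          (Q.updateRow 0 (fun t => vv x (i+1) (a+2) (t+1))) (finRotate (k+2) l) t := by
      ext l t
      rw [Matrix.of_apply, Matrix.submatrix_apply, id]
      rcases Fin.eq_castSucc_or_eq_last l with ⟨l, rfl⟩ | rfl
      · rw [finRotate_apply, Fin.coeSucc_eq_succ, Matrix.updateRow_ne (Fin.succ_ne_zero _)]
        rcases eq_or_ne l 0 with rfl | h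
        · simp [hQ, hw]
        · rw [Equiv.swap_apply_of_ne_of_ne (by simpa using h) (Fin.castSucc_lt_last _).ne,
            Matrix.updateRow_ne (Fin.castSucc_lt_last _).ne]
          simp [hM, hQ, h]
          congr 1; ring
      · rw [finRotate_last]
        simp [hM]
    rw [q4, q2, q1] at q3
    have q5 : ∏ t : Fin k, x (i+1) (a + (t.succ : ℕ) + 2) = X := by
      rw [hX]; apply Finset.prod_congr rfl; intro t _; congr 1; simp; ring
    rw [q5]
    push_cast at q3
    have : ((-1:ℝ)^k)*(-1)^k = 1 := by rw [← mul_pow]; simp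
    simp only [Fin.val_zero, add_zero]
    linear_combination (-1)^(k+1) * X * q3 - X * x (i+1) (a+2) * Q.det * this
  rw [show k+1+1 = k+2 from rfl, h1, h3, h6, h4, h5]
  rw [h2]
  have : ((-1:ℝ)^k)*(-1)^k = 1 := by rw [← mul_pow]; simp
  linear_combination X * x (i+1) (a+1+(k+1)+1) * key - X * x (i+1) (a+1+(k+1)+1) * (M.updateRow (Fin.last _) w).det * ((M.updateRow 0 (M (Fin.last _))).updateRow (Fin.last _) e).det * this

theorem rect_rec (x : ℕ → ℕ → ℝ) (i j : ℕ) : rectProd x (i+1) (j+1) * rectProd x i j =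
    x (i+1) (j+1) * (rectProd x i (j+1) * rectProd x (i+1) j) := by
  unfold rectProd
  rw [Finset.prod_Icc_succ_top (by omega), Finset.prod_Icc_succ_top (by omega),
    Finset.prod_Icc_succ_top (by omega)]
  ring

theorem rect_pos (x : ℕ → ℕ → ℝ) (hx : ∀ i j, 0 < x i j) (i j : ℕ) : 0 < rectProd x i j :=
  Finset.prod_pos fun _ _ => Finset.prod_pos fun _ _ => hx _ _

theorem EE_zero_left (x : ℕ → ℕ → ℝ) (i k : ℕ) : EE x i 0 k = rectProd x i k := by
  rcases k with _ | k
  · simp [EE, rectProd]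
  induction i with
  | zero =>
    have : rectProd x 0 (k+1) = 1 := by simp [rectProd]
    rw [this, EE, ← Matrix.det_one (n := Fin (k+1))]
    congr 1
    ext l t
    simp [vv, Matrix.one_apply, Fin.ext_iff]
  | succ i ih =>
    rw [EE_succ]
    have h := Matrix.det_mul_column (fun l : Fin (k+1) => if l = 0 then x (i+1) 1 else 1)
      (Matrix.of fun l t : Fin (k+1) => vv x i (0 + (l+1)) (t+1))
    rw [Fin.prod_univ_succ] at h
    simp only [if_true, Fin.succ_ne_zero, if_false, Finset.prod_const_one, mul_one] at h
    rw [← EE, ih] at h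
    have e : (Matrix.of fun l t : Fin (k+1) =>
      if l = 0 then vv x (i+1) (0+1) (t+1) else vv x i (0 + (l+1)) (t+1)) =
      (Matrix.of fun l t : Fin (k+1) => (if l = 0 then x (i+1) 1 else 1) *
        (Matrix.of fun l t : Fin (k+1) => vv x i (0 + (l+1)) (t+1)) l t) := by
      ext l t
      rcases eq_or_ne l 0 with rfl | hl
      · simp [vv]
      · simp [hl]
    rw [e, h]
    have e2 : rectProd x (i+1) (k+1) = rectProd x i (k+1) * ∏ t : Fin (k+1), x (i+1) (t+1) := by
      unfold rectProd
      rw [Finset.prod_Icc_succ_top (by omega)]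
      congr 1
      rw [Fin.prod_univ_eq_prod_range (fun t => x (i+1) (t+1)) (k+1),
        Finset.range_eq_Ico, Finset.prod_Ico_add' (fun t => x (i+1) t) 0 (k+1) 1]
      rfl
    rw [e2, Fin.prod_univ_succ]
    have e3 : ∀ t : Fin k, 0 + (t:ℕ) + 2 = (t.succ : ℕ) + 1 := by intro t; simp
    simp only [e3]
    simp
    ring

theorem EE_vanish (x : ℕ → ℕ → ℝ) (i a : ℕ) : EE x i (a+1) (i+1) = 0 := by
  have h0 : Matrix.det (Matrix.of fun r t : Fin (i+1) => vv x r (i+2-r) (t+1)) = 0 := by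
    apply Matrix.det_eq_zero_of_row_eq_zero 0
    intro t
    have := t.2
    simp [vv]; omega
  obtain ⟨f, hf0, hf⟩ := Matrix.exists_mulVec_eq_zero_iff.mpr h0
  apply Matrix.exists_mulVec_eq_zero_iff.mp
  refine ⟨f, hf0, ?_⟩
  have key : ∀ N r c, r + c = N → r ≤ i → i + 2 ≤ r + c →
      ∑ t : Fin (i+1), vv x r c (t+1) * f t = 0 := by
    intro N
    induction N with
    | zero => intro r c; omega
    | succ N ih =>
      intro r c hN hr hc
      rcases hc.eq_or_lt with hc | hc
      · have := congrFun hf ⟨r, by omega⟩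
        simp only [Matrix.mulVec, dotProduct, Matrix.of_apply, Pi.zero_apply] at this
        rw [← this]
        rw [show c = i+2-r by omega]
      · rcases r with _ | r
        · apply Finset.sum_eq_zero
          intro t _
          have := t.2
          rw [vv, if_neg (by omega), zero_mul]
        rcases c with _ | c
        · simp [vv]
        have h1 := ih r (c+1) (by omega) (by omega) (by omega)
        have h2 := ih (r+1) c (by omega) (by omega) (by omega)
        simp only [vv, mul_assoc, add_mul, ← Finset.mul_sum, Finset.sum_add_distrib]
        rw [h1, h2]; simp
  ext l
  simp only [Matrix.mulVec, dotProduct, Matrix.of_apply, Pi.zero_apply]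
  exact key _ _ _ rfl le_rfl (by omega)

theorem EE_full (x : ℕ → ℕ → ℝ) (hx : ∀ i j, 0 < x i j) (i a : ℕ) :
    EE x i a i = rectProd x i (a+i) := by
  induction i generalizing a with
  | zero => simp [EE, rectProd]
  | succ i ih =>
    induction a with
    | zero => rw [EE_zero_left, zero_add]
    | succ a iha =>
      have h := octa x i a i
      rw [EE_vanish, zero_mul, zero_add, ih, ih, iha] at h
      have h2 := rect_rec x i (a+1+i)
      rw [show a + (i+1) = a+1+i by ring, show a+2+i = a+1+i+1 by ring, ← h2] at h
      exact mul_right_cancel₀ (rect_pos x hx _ _).ne' h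

/-- reversed paths starting (virtually) at `(0,s)`, the virtual start not being recorded. -/
inductive RP (s : ℕ) : ℕ × ℕ → List (ℕ × ℕ) → Prop
  | nil : RP s (0, s) []
  | up {r c : ℕ} {L : List (ℕ × ℕ)} : RP s (r, c) L → RP s (r+1, c) ((r+1, c) :: L)
  | left {r c : ℕ} {L : List (ℕ × ℕ)} : RP s (r+1, c) L → RP s (r+1, c+1) ((r+1, c+1) :: L)

theorem RP.mem {s : ℕ} {q : ℕ × ℕ} {L : List (ℕ × ℕ)} (h : RP s q L) :
    s ≤ q.2 ∧ ∀ v ∈ L, 1 ≤ v.1 ∧ v.1 ≤ q.1 ∧ s ≤ v.2 ∧ v.2 ≤ q.2 := by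
  induction h with
  | nil => simp
  | up h ih =>
    refine ⟨ih.1, fun v hv => ?_⟩
    rcases List.mem_cons.mp hv with rfl | hv
    · simpa using ih.1
    · have := ih.2 v hv
      simp only at this ⊢; omega
  | left h ih =>
    have h1 := ih.1
    simp only at h1
    refine ⟨by simp only; omega, fun v hv => ?_⟩
    rcases List.mem_cons.mp hv with rfl | hv
    · simp; omega
    · have := ih.2 v hv
      simp only at this ⊢; omega

theorem RP.head_eq {s : ℕ} {q : ℕ × ℕ} {L : List (ℕ × ℕ)} (h : RP s q L) :
    q = L.headD (0, s) := by
  cases h <;> simp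

theorem RP_zero {s c : ℕ} {L : List (ℕ × ℕ)} : RP s (0, c) L ↔ c = s ∧ L = [] := by
  constructor
  · intro h; cases h; simp
  · rintro ⟨rfl, rfl⟩; exact RP.nil

theorem RP_succ {s r c : ℕ} {L : List (ℕ × ℕ)} : RP s (r+1, c+1) L ↔
    ∃ L', L = (r+1, c+1) :: L' ∧ (RP s (r, c+1) L' ∨ RP s (r+1, c) L') := by
  constructor
  · intro h
    cases h with
    | up h => exact ⟨_, rfl, Or.inl h⟩
    | left h => exact ⟨_, rfl, Or.inr h⟩
  · rintro ⟨L', rfl, h | h⟩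
    · exact RP.up h
    · exact RP.left h

theorem RP_finite (s : ℕ) : ∀ N r c, r + c = N → {L | RP s (r, c) L}.Finite := by
  intro N
  induction N with
  | zero =>
    intro r c h
    obtain ⟨rfl, rfl⟩ : r = 0 ∧ c = 0 := by omega
    exact (Set.finite_singleton []).subset fun L hL => (RP_zero.mp hL).2
  | succ N ih =>
    intro r c h
    rcases r with _ | r
    · exact (Set.finite_singleton []).subset fun L hL => (RP_zero.mp hL).2
    rcases c with _ | c
    · refine ((ih r 0 (by omega)).image (fun L => (r+1, 0) :: L)).subset fun L hL => ?_
      cases hL with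
      | up h => exact ⟨_, h, rfl⟩
    · refine (((ih r (c+1) (by omega)).union (ih (r+1) c (by omega))).image
        (fun L => (r+1, c+1) :: L)).subset fun L hL => ?_
      obtain ⟨L', rfl, h⟩ := RP_succ.mp hL
      exact ⟨L', h, rfl⟩

/-- families of disjoint reversed paths -/
def Fam (k : ℕ) (p : Fin k → ℕ × ℕ) : Set (Fin k → List (ℕ × ℕ)) :=
  {P | (∀ l : Fin k, RP (l+1) (p l) (P l)) ∧ ∀ l l', l ≠ l' → ∀ v ∈ P l, v ∉ P l'}

theorem Fam_finite (k : ℕ) (p : Fin k → ℕ × ℕ) : (Fam k p).Finite := by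
  refine (Set.Finite.pi' (fun l : Fin k => RP_finite (l+1) _ (p l).1 (p l).2 rfl)).subset ?_
  intro P hP l
  exact hP.1 l

def wt (x : ℕ → ℕ → ℝ) {k : ℕ} (P : Fin k → List (ℕ × ℕ)) : ℝ :=
  ∏ l, ((P l).map fun v => x v.1 v.2).prod

noncomputable def NN (x : ℕ → ℕ → ℝ) {k : ℕ} (p : Fin k → ℕ × ℕ) : ℝ :=
  ∑ᶠ P ∈ Fam k p, wt x P

noncomputable def DD (x : ℕ → ℕ → ℝ) {k : ℕ} (p : Fin k → ℕ × ℕ) : ℝ :=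
  Matrix.det (Matrix.of fun l t : Fin k => vv x (p l).1 (p l).2 (t+1))

theorem Fam_noninj {k : ℕ} (p : Fin k → ℕ × ℕ) (l l' : Fin k) (hl : l ≠ l') (h : p l = p l') :
    Fam k p = ∅ := by
  ext P
  simp only [Set.mem_empty_iff_false, iff_false]
  rintro ⟨h1, h2⟩
  have a := (h1 l).head_eq
  have b := (h1 l').head_eq
  have c := h2 l l' hl
  have ha := h1 l
  have hb := h1 l'
  rw [← h] at b hb
  cases hPl : P l with
  | nil =>
    rw [hPl] at ha a
    cases hPl' : P l' with
    | nil =>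
      rw [hPl'] at b
      simp only [List.headD_nil] at a b
      rw [a] at b
      simp only [Prod.mk.injEq, add_left_inj, true_and] at b
      exact hl (Fin.ext b)
    | cons q L =>
      rw [hPl'] at hb b
      have := (hb.mem.2 q (by simp)).1
      simp only [List.headD_cons, List.headD_nil] at a b
      rw [← b, a] at this
      simp at this
  | cons q L =>
    rw [hPl] at a ha c
    have hq := (ha.mem.2 q (by simp)).1
    cases hPl' : P l' with
    | nil =>
      rw [hPl'] at b
      simp only [List.headD_cons, List.headD_nil] at a b
      rw [← a, b] at hq
      simp at hq
    | cons q' L' =>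
      rw [hPl'] at b c
      simp only [List.headD_cons] at a b
      apply c q (by simp)
      rw [← a, b]; simp

/-- the step recursion for families -/
theorem NN_step (x : ℕ → ℕ → ℝ) {k : ℕ} (p : Fin k → ℕ × ℕ) (hp : Function.Injective p)
    (l : Fin k) (r c : ℕ) (hl : p l = (r+1, c+1))
    (hmax : ∀ l', 1 ≤ (p l').1 → (p l').1 + (p l').2 ≤ r + 1 + (c + 1)) :
    NN x p = x (r+1) (c+1) *
      (NN x (Function.update p l (r, c+1)) + NN x (Function.update p l (r+1, c))) := by
  set g : (Fin k → List (ℕ × ℕ)) → (Fin k → List (ℕ × ℕ)) :=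
    fun P => Function.update P l ((r+1, c+1) :: P l) with hg
  have hginj : Function.Injective g := by
    intro P Q h
    ext1 l'
    have := congrFun h l'
    by_cases e : l' = l
    · subst e; simpa [hg] using this
    · simpa [hg, e] using this
  have hU : Fam k p = g '' (Fam k (Function.update p l (r, c+1)) ∪
      Fam k (Function.update p l (r+1, c))) := by
    ext P
    constructor
    · rintro ⟨h1, h2⟩
      have h := h1 l
      rw [hl, RP_succ] at h
      obtain ⟨L', hL', h⟩ := h
      refine ⟨Function.update P l L', ?_, ?_⟩
      · have hsub : ∀ l', ∀ v ∈ Function.update P l L' l', v ∈ P l' := by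
          intro l' v hv
          by_cases e : l' = l
          · subst e
            rw [Function.update_self] at hv
            rw [hL']; exact List.mem_cons_of_mem _ hv
          · rwa [Function.update_of_ne e] at hv
        have hd : ∀ a b, a ≠ b → ∀ v ∈ Function.update P l L' a, v ∉ Function.update P l L' b :=
          fun a b hab v hv hv' => h2 a b hab v (hsub a v hv) (hsub b v hv')
        have hr : ∀ q, RP (l+1) q L' → ∀ l' : Fin k, RP (l'+1) (Function.update p l q l')
            (Function.update P l L' l') := by
          intro q hq l'
          by_cases e : l' = l
          · subst e; simpa using hq
          · simpa [e] using h1 l'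
        rcases h with h | h
        · exact Or.inl ⟨hr _ h, hd⟩
        · exact Or.inr ⟨hr _ h, hd⟩
      · simp [hg, ← hL']
    · rintro ⟨P', h, rfl⟩
      have h' : ∃ q, (RP (l+1) q (P' l) → RP (l+1) (r+1, c+1) ((r+1, c+1) :: P' l)) ∧
          P' ∈ Fam k (Function.update p l q) := by
        rcases h with h | h
        · exact ⟨_, fun h => RP.up h, h⟩
        · exact ⟨_, fun h => RP.left h, h⟩
      obtain ⟨q, hq, h1, h2⟩ := h'
      have hothers : ∀ l' : Fin k, l' ≠ l → RP (l'+1) (p l') (P' l') := by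
        intro l' e
        simpa [e] using h1 l'
      have hav : ∀ l', l' ≠ l → (r+1, c+1) ∉ P' l' := by
        intro l' e hmem
        have h3 := (hothers l' e).mem.2 _ hmem
        simp only at h3
        have h4 := hmax l' (by omega)
        apply e
        apply hp
        rw [hl]
        ext <;> simp only <;> omega
      refine ⟨fun l' => ?_, fun a b hab v hv hv' => ?_⟩
      · by_cases e : l' = l
        · subst e
          rw [hl]
          simp only [hg, Function.update_self]
          apply hq
          simpa using h1 l'
        · simpa [hg, e] using hothers l' e
      · by_cases ea : a = l
        · subst ea
          have eb : b ≠ a := hab.symm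
          simp only [hg, Function.update_self, Function.update_of_ne eb] at hv hv'
          rcases List.mem_cons.mp hv with rfl | hv
          · exact hav b eb hv'
          · exact h2 _ _ hab v hv hv'
        · by_cases eb : b = l
          · subst eb
            simp only [hg, Function.update_self, Function.update_of_ne ea] at hv hv'
            rcases List.mem_cons.mp hv' with rfl | hv'
            · exact hav a ea hv
            · exact h2 _ _ hab v hv hv'
          · simp only [hg, Function.update_of_ne ea, Function.update_of_ne eb] at hv hv'
            exact h2 _ _ hab v hv hv'
  have hdisj : Disjoint (Fam k (Function.update p l (r, c+1)))
      (Fam k (Function.update p l (r+1, c))) := by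
    rw [Set.disjoint_left]
    rintro P ⟨h1, _⟩ ⟨h2, _⟩
    have a := (h1 l).head_eq
    have b := (h2 l).head_eq
    rw [← a] at b
    simp at b
  have hwt : ∀ P, wt x (g P) = x (r+1) (c+1) * wt x P := by
    intro P
    unfold wt
    rw [Fintype.prod_eq_mul_prod_compl l, Fintype.prod_eq_mul_prod_compl l, ← mul_assoc]
    congr 1
    · simp [hg]
    · apply Finset.prod_congr rfl
      intro l' h
      have e : l' ≠ l := by simpa using h
      simp [hg, e]
  unfold NN
  rw [hU, finsum_mem_image hginj.injOn, finsum_mem_union hdisj (Fam_finite _ _) (Fam_finite _ _)]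
  simp only [hwt]
  rw [mul_add, mul_finsum_mem' (wt x) _ (Fam_finite _ _), mul_finsum_mem' (wt x) _ (Fam_finite _ _)]

theorem DD_step (x : ℕ → ℕ → ℝ) {k : ℕ} (p : Fin k → ℕ × ℕ)
    (l : Fin k) (r c : ℕ) (hl : p l = (r+1, c+1)) :
    DD x p = x (r+1) (c+1) *
      (DD x (Function.update p l (r, c+1)) + DD x (Function.update p l (r+1, c))) := by
  set A : Matrix (Fin k) (Fin k) ℝ := Matrix.of fun l t : Fin k => vv x (p l).1 (p l).2 (t+1)
    with hA
  have h : ∀ q : ℕ × ℕ, DD x (Function.update p l q) =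
      (A.updateRow l fun t => vv x q.1 q.2 (t+1)).det := by
    intro q
    unfold DD; congr 1; ext l' t
    by_cases e : l' = l
    · subst e; simp
    · simp [Matrix.updateRow_ne e, e, hA]
  rw [h, h, ← Matrix.det_updateRow_add, ← Matrix.det_updateRow_smul]
  have : p = Function.update p l (r+1, c+1) := by rw [← hl]; simp
  rw [this, h]
  congr 2
  ext t
  simp [vv]

theorem NN_eq_DD (x : ℕ → ℕ → ℝ) {k : ℕ} : ∀ (N : ℕ) (p : Fin k → ℕ × ℕ),
    (∑ l, ((p l).1 + (p l).2) = N) →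
    (∀ l l', l < l' → (p l').1 ≤ (p l).1 ∧ (p l).2 ≤ (p l').2) → NN x p = DD x p := by
  intro N
  induction N using Nat.strong_induction_on with
  | _ N ih =>
  intro p hN hc
  by_cases hinj : Function.Injective p
  swap
  · simp only [Function.Injective, not_forall] at hinj
    obtain ⟨l, l', h, hne⟩ := hinj
    rw [NN, Fam_noninj p l l' hne h, finsum_mem_empty, DD, Matrix.det_zero_of_row_eq hne]
    ext t; simp [h]
  by_cases hrow : ∀ l, (p l).1 = 0
  · by_cases hid : ∀ l : Fin k, (p l).2 = l + 1
    · have h1 : Fam k p = {fun _ => []} := by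
        ext P
        simp only [Set.mem_singleton_iff]
        constructor
        · rintro ⟨h, _⟩
          ext1 l
          have := h l
          rw [show p l = (0, (p l).2) from Prod.ext (hrow l) rfl, RP_zero] at this
          exact this.2
        · rintro rfl
          refine ⟨fun l => ?_, by simp⟩
          rw [show p l = (0, (p l).2) from Prod.ext (hrow l) rfl, RP_zero]
          exact ⟨hid l, rfl⟩
      rw [NN, h1, finsum_mem_singleton, DD]
      have h2 : (Matrix.of fun l t : Fin k => vv x (p l).1 (p l).2 (t+1)) = 1 := by
        ext l t
        simp [hrow, hid, vv, Matrix.one_apply, Fin.ext_iff]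
      rw [h2]; simp [wt]
    · have h1 : Fam k p = ∅ := by
        ext P
        simp only [Set.mem_empty_iff_false, iff_false]
        rintro ⟨h, _⟩
        apply hid
        intro l
        have := h l
        rw [show p l = (0, (p l).2) from Prod.ext (hrow l) rfl, RP_zero] at this
        exact this.1
      rw [NN, h1, finsum_mem_empty]
      symm
      by_contra hne
      apply hid
      have hb : ∀ l, 1 ≤ (p l).2 ∧ (p l).2 ≤ k := by
        intro l
        by_contra hb
        apply hne
        apply Matrix.det_eq_zero_of_row_eq_zero l
        intro t
        have := t.2
        simp only [Matrix.of_apply, hrow, vv]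
        rw [if_neg (by omega)]
      have hmono : StrictMono (fun l => (⟨(p l).2 - 1, by have := hb l; omega⟩ : Fin k)) := by
        intro a b hab
        have h1 := (hc a b hab).2
        have h2 : (p a).2 ≠ (p b).2 := fun h =>
          hab.ne (hinj (Prod.ext (by rw [hrow, hrow]) h))
        have := hb a
        have := hb b
        rw [Fin.lt_def]
        simp only
        omega
      intro l
      have h3 : (⟨(p l).2 - 1, by have := hb l; omega⟩ : Fin k) = l := by
        have := hmono.range_inj (g := id) strictMono_id
        have h4 := this.mp (by
          rw [Set.range_id, (Finite.injective_iff_surjective.mp hmono.injective).range_eq])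
        exact congrFun h4 l
      have := congrArg Fin.val h3
      simp only at this
      have := hb l
      omega
  · push Not at hrow
    obtain ⟨l0, hl0⟩ := hrow
    obtain ⟨l, hlm, hmax⟩ := Finset.exists_max_image
      (Finset.univ.filter fun l => (p l).1 ≠ 0) (fun l => (p l).1 + (p l).2) ⟨l0, by simpa using hl0⟩
    simp only [Finset.mem_filter, Finset.mem_univ, true_and] at hlm hmax
    obtain ⟨r, c, hl⟩ : ∃ r c, p l = (r+1, c) := ⟨(p l).1 - 1, (p l).2, by ext <;> simp; omega⟩
    rcases c with _ | c
    · have h1 : Fam k p = ∅ := by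
        ext P
        simp only [Set.mem_empty_iff_false, iff_false]
        rintro ⟨h, _⟩
        have := (h l).mem.1
        rw [hl] at this
        simp at this
      rw [NN, h1, finsum_mem_empty, DD]
      symm
      apply Matrix.det_eq_zero_of_row_eq_zero l
      intro t
      simp [hl, vv]
    rw [hl] at hmax
    simp only at hmax
    rw [NN_step x p hinj l r c hl (fun l' h => hmax l' (by omega)), DD_step x p l r c hl]
    have hsum : ∀ q : ℕ × ℕ, q.1 + q.2 < r + 1 + (c + 1) →
        ∑ a, ((Function.update p l q a).1 + (Function.update p l q a).2) < N := by
      intro q hq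
      rw [← hN]
      apply Finset.sum_lt_sum
      · intro a _
        by_cases e : a = l
        · subst e; simp only [Function.update_self, hl]; omega
        · simp [e]
      · refine ⟨l, Finset.mem_univ _, ?_⟩
        simp only [Function.update_self, hl]; omega
    congr 2
    · refine ih _ (hsum (r, c+1) (by simp only; omega)) _ rfl ?_
      intro a b hab
      have h := hc a b hab
      by_cases ea : a = l
      · subst ea
        have hb := hmax b
        have hne : p a ≠ p b := fun h => hab.ne (hinj h)
        rw [Function.update_self, Function.update_of_ne hab.ne']
        rw [hl] at h hne
        have hne' : ¬ ((p b).1 = r+1 ∧ (p b).2 = c+1) := fun h => hne (Prod.ext h.1.symm h.2.symm)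
        simp only at h ⊢
        omega
      · by_cases eb : b = l
        · subst eb
          rw [Function.update_self, Function.update_of_ne hab.ne]
          rw [hl] at h
          simp only at h ⊢
          omega
        · rwa [Function.update_of_ne ea, Function.update_of_ne eb]
    · refine ih _ (hsum (r+1, c) (by simp only; omega)) _ rfl ?_
      intro a b hab
      have h := hc a b hab
      by_cases ea : a = l
      · subst ea
        rw [Function.update_self, Function.update_of_ne hab.ne']
        rw [hl] at h
        simp only at h ⊢
        omega
      · by_cases eb : b = l
        · subst eb
          have hb := hmax a
          have hne : p a ≠ p b := fun h => hab.ne (hinj h)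
          rw [Function.update_self, Function.update_of_ne hab.ne]
          rw [hl] at h hne
          have hne' : ¬ ((p a).1 = r+1 ∧ (p a).2 = c+1) := fun h => hne (Prod.ext h.1 h.2)
          simp only at h ⊢
          omega
        · rwa [Function.update_of_ne ea, Function.update_of_ne eb]

theorem RP_of_grid (m n s : ℕ) : ∀ (L : List (ℕ × ℕ)) (q : ℕ × ℕ),
    IsGridPath m n (1, s) q L.reverse → RP s q L := by
  intro L
  induction L with
  | nil => intro q h; simp [IsGridPath] at h
  | cons a L ih =>
    rintro q ⟨h1, h2, h3, h4⟩
    rw [List.reverse_cons] at h1 h2 h3 h4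
    have haq : a = q := by simpa using h2
    subst haq
    rcases L with _ | ⟨b, L⟩
    · have : a = (1, s) := by simpa using h1
      subst this
      exact RP.up RP.nil
    · change List.IsChain _ _ at h4
      rw [List.isChain_append] at h4
      have hb : RP s b (b :: L) := by
        apply ih
        refine ⟨?_, by simp, fun v hv => h3 v (List.mem_append_left _ hv), h4.1⟩
        rw [List.head?_append] at h1
        cases hh : (b :: L).reverse.head? with
        | none => simp at hh
        | some y => rw [hh] at h1; simpa using h1
      have hstep : GridStep b a := h4.2.2 b (by simp) a (by simp)
      have hb1 := (h3 b (by simp)).1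
      obtain ⟨b1, b2⟩ := b
      rcases hstep with rfl | rfl
      · exact RP.up hb
      · obtain ⟨r, rfl⟩ : ∃ r, b1 = r + 1 := ⟨b1 - 1, by simp only at hb1; omega⟩
        exact RP.left hb

theorem grid_append {m n : ℕ} {s q q' : ℕ × ℕ} {L : List (ℕ × ℕ)}
    (h : IsGridPath m n s q L) (hs : GridStep q q')
    (hq : 1 ≤ q'.1 ∧ q'.1 ≤ m ∧ 1 ≤ q'.2 ∧ q'.2 ≤ n) : IsGridPath m n s q' (L ++ [q']) := by
  obtain ⟨h1, h2, h3, h4⟩ := h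
  refine ⟨by rw [List.head?_append, h1]; rfl, by simp, ?_, ?_⟩
  · intro v hv
    rcases List.mem_append.mp hv with hv | hv
    · exact h3 v hv
    · rw [List.mem_singleton.mp hv]; exact hq
  · change List.IsChain _ _
    rw [List.isChain_append]
    refine ⟨h4, by simp, ?_⟩
    intro a ha b hb
    rw [h2] at ha
    simp at ha hb
    subst ha hb
    exact hs

theorem grid_of_RP (m n s : ℕ) (hs : 1 ≤ s) {q : ℕ × ℕ} {L : List (ℕ × ℕ)} (h : RP s q L) :
    1 ≤ q.1 → q.1 ≤ m → q.2 ≤ n → IsGridPath m n (1, s) q L.reverse := by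
  induction h with
  | nil => intro h; simp at h
  | @up r c L h ih =>
    intro h1 h2 h3
    have h4 := h.mem.1
    simp only at h1 h2 h3 h4 ih
    rw [List.reverse_cons]
    rcases r with _ | r
    · obtain ⟨rfl, rfl⟩ := RP_zero.mp h
      refine ⟨by simp, by simp, ?_, ?_⟩
      · intro v hv
        simp at hv
        subst hv
        simp only; omega
      · change List.IsChain _ _
        simp
    · exact grid_append (ih (by omega) (by omega) h3) (Or.inl rfl) (by simp only; omega)
  | @left r c L h ih =>
    intro h1 h2 h3
    simp only at h1 h2 h3 ih
    rw [List.reverse_cons]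
    exact grid_append (ih (by omega) (by omega) (by omega)) (Or.inr rfl) (by simp only; omega)

theorem NCTuple.ext_path {m n : ℕ} {s t : List (ℕ × ℕ)} (A B : NCTuple m n s t)
    (h : A.path = B.path) : A = B := by
  cases A; cases B; cases h; rfl

theorem ybar_eq_NN (m n : ℕ) (x : ℕ → ℕ → ℝ) (i j k : ℕ) (hi : 1 ≤ i) (him : i ≤ m)
    (hjn : j ≤ n) (hkj : k ≤ j) :
    ybar m n x i j k = NN x (fun l : Fin k => (i, j - k + (l + 1))) := by
  unfold NN ybar
  rw [← finsum_mem_univ]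
  have hsrc : ∀ l, l < k → ((List.range k).map fun l => (1, l + 1)).getD l (0,0) = (1, l+1) := by
    intro l hl
    simp [List.getD, hl]
  have htgt : ∀ l, l < k →
      ((List.range k).map fun l => (i, j - k + (l + 1))).getD l (0,0) = (i, j - k + (l+1)) := by
    intro l hl
    simp [List.getD, hl]
  refine finsum_mem_eq_of_bijOn (fun T (l : Fin k) => (T.path.getD l []).reverse) ⟨?_, ?_, ?_⟩ ?_
  · intro T _
    have hlen : T.path.length = k := by simpa using T.hlen
    refine ⟨fun l => ?_, fun l l' hl v hv hv' => ?_⟩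
    · have := T.valid l (by omega)
      rw [hsrc l l.2, htgt l l.2] at this
      apply RP_of_grid m n
      simpa using this
    · refine T.disj l l' (by omega) (by omega) (fun h => hl (Fin.ext h)) v ?_ ?_
      · simpa using hv
      · simpa using hv'
  · intro A _ B _ h
    apply NCTuple.ext_path
    have hA : A.path.length = k := by simpa using A.hlen
    have hB : B.path.length = k := by simpa using B.hlen
    apply List.ext_getElem (by omega)
    intro l h1 h2
    have := congrFun h ⟨l, by omega⟩
    simp only [List.reverse_inj] at this
    simpa [List.getD, h1, h2] using this
  · rintro P ⟨h1, h2⟩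
    have hg : ∀ l (hl : l < k), (List.ofFn fun l => (P l).reverse).getD l [] =
        (P ⟨l, hl⟩).reverse := by
      intro l hl
      simp [List.getD, hl]
    refine ⟨⟨List.ofFn fun l => (P l).reverse, by simp, by simp, ?_, ?_⟩, Set.mem_univ _, ?_⟩
    · intro l hl
      have hl : l < k := by simpa using hl
      rw [hsrc l hl, htgt l hl, hg l hl]
      exact grid_of_RP m n (l+1) (by omega) (h1 ⟨l, hl⟩) hi him (by simp only; omega)
    · intro l l' hl hl' hne v hv hv'
      have hl : l < k := by simpa using hl
      have hl' : l' < k := by simpa using hl'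
      rw [hg l hl] at hv
      rw [hg l' hl'] at hv'
      exact h2 ⟨l, hl⟩ ⟨l', hl'⟩ (by simpa using hne) v (by simpa using hv) (by simpa using hv')
    · ext1 l
      simp only
      rw [hg l l.2]
      simp
  · intro T _
    have hlen : T.path.length = k := by simpa using T.hlen
    unfold wt
    have : T.path = List.ofFn fun l : Fin k => T.path.getD l [] := by
      apply List.ext_getElem (by simp [hlen])
      intro l h1 h2
      simp [List.getD, h1]
    conv_lhs => rw [this]
    rw [List.map_ofFn, List.prod_ofFn]
    apply Finset.prod_congr rfl
    intro l _
    rw [List.map_reverse, List.prod_reverse]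
    rfl

theorem ybar_eq_EE (m n : ℕ) (x : ℕ → ℕ → ℝ) (i j k : ℕ) (hi : 1 ≤ i) (him : i ≤ m)
    (hjn : j ≤ n) (hkj : k ≤ j) : ybar m n x i j k = EE x i (j - k) k := by
  rw [ybar_eq_NN m n x i j k hi him hjn hkj, NN_eq_DD x _ _ rfl]
  · rfl
  · intro l l' h
    have : (l : ℕ) < l' := h
    simp only; omega

/-- the normalized array `ỹ` satisfies the boundary conditions and the
octahedron recurrence. -/
theorem stmt_9 (m n : ℕ) (hm : 1 ≤ m) (hn : 1 ≤ n)
    (x : ℕ → ℕ → ℝ) (hx : ∀ i j, 0 < x i j) :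
    (∀ i j, 1 ≤ i → i ≤ m → 1 ≤ j → j ≤ n →
      ytilde m n x i j 0 = 1 / rectProd x i j) ∧
    (∀ i j, 1 ≤ i → i ≤ m → 1 ≤ j → j ≤ n →
      ytilde m n x i j (min i j) = 1) ∧
    (∀ i j k, 2 ≤ i → i ≤ m → 2 ≤ j → j ≤ n → 1 ≤ k → k ≤ min i j - 1 →
      ytilde m n x i j k * ytilde m n x (i - 1) (j - 1) (k - 1) =
        ytilde m n x (i - 1) j k * ytilde m n x i (j - 1) (k - 1) +
        ytilde m n x (i - 1) j (k - 1) * ytilde m n x i (j - 1) k) := by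
  refine ⟨?_, ?_, ?_⟩
  · intro i j hi him hj hjn
    rw [ytilde, ybar_eq_EE m n x i j 0 hi him hjn (Nat.zero_le _)]
    simp [EE]
  · intro i j hi him hj hjn
    rw [ytilde, ybar_eq_EE m n x i j _ hi him hjn (Nat.min_le_right _ _)]
    have h : EE x i (j - min i j) (min i j) = rectProd x i j := by
      rcases le_total i j with h | h
      · rw [min_eq_left h, EE_full x hx, Nat.sub_add_cancel h]
      · rw [min_eq_right h, Nat.sub_self, EE_zero_left]
    rw [h, div_self (rect_pos x hx i j).ne']
  · intro i j k hi him hj hjn hk hkk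
    obtain ⟨i, rfl⟩ : ∃ i', i = i' + 1 := ⟨i - 1, by omega⟩
    obtain ⟨k, rfl⟩ : ∃ k', k = k' + 1 := ⟨k - 1, by omega⟩
    obtain ⟨a, rfl⟩ : ∃ a, j = (a + 1 + k) + 1 := ⟨j - 2 - k, by omega⟩
    simp only [Nat.add_sub_cancel]
    unfold ytilde
    rw [ybar_eq_EE m n x _ _ _ (by omega) (by omega) (by omega) (by omega),
      ybar_eq_EE m n x i (a+1+k) k (by omega) (by omega) (by omega) (by omega),
      ybar_eq_EE m n x i (a+1+k+1) (k+1) (by omega) (by omega) (by omega) (by omega),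
      ybar_eq_EE m n x (i+1) (a+1+k) k (by omega) (by omega) (by omega) (by omega),
      ybar_eq_EE m n x i (a+1+k+1) k (by omega) (by omega) (by omega) (by omega),
      ybar_eq_EE m n x (i+1) (a+1+k) (k+1) (by omega) (by omega) (by omega) (by omega)]
    rw [show a+1+k+1-(k+1) = a+1 by omega, show a+1+k-k = a+1 by omega,
      show a+1+k+1-k = a+2 by omega, show a+1+k-(k+1) = a by omega]
    have h1 := octa x i a k
    have h2 := rect_rec x i (a+1+k)
    have p1 := (rect_pos x hx i (a+1+k+1)).ne'
    have p2 := (rect_pos x hx (i+1) (a+1+k)).ne'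
    have p3 := (hx (i+1) (a+1+k+1)).ne'
    rw [div_mul_div_comm, div_mul_div_comm, div_mul_div_comm, h1, h2,
      mul_div_mul_left _ _ p3, add_div]
end

section
/- Let λ = (λ_1 ≥ … ≥ λ_k ≥ 1) be a partition with k positive parts, let 0 ≤ t ≤ k−1, and let n ≥ k. Set μ := (λ_1,…,λ_t, λ_{t+2}−1, …, λ_k−1), ν := (λ_1+1,…,λ_t+1, λ_{t+2},…,λ_k) (each with k−1 parts), and ρ := (λ_1−1,…,λ_k−1). Then, as polynomials in x_1,…,x_n: s^{[n]}_λ · s^{[2,n]}_μ = s^{[2,n]}_λ · s^{[n]}_μ + x_1 · s^{[n]}_ρ · s^{[2,n]}_ν. -/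
/-- A semistandard Young tableau of shape `(lam 0, lam 1, …, lam (k-1))` (so `lam i` is the
length of the `(i+1)`-st row), with entries in `{a, a+1, …, b}`: rows weakly increase,
columns strictly increase.  Entries outside the shape are `0`. -/
structure SSYT (k : ℕ) (lam : ℕ → ℤ) (a b : ℕ) where
  entry : ℕ → ℕ → ℕ
  zero_outside : ∀ i j : ℕ, ¬(i < k ∧ (j : ℤ) < lam i) → entry i j = 0
  lower : ∀ i j : ℕ, i < k → (j : ℤ) < lam i → a ≤ entry i j
  upper : ∀ i j : ℕ, i < k → (j : ℤ) < lam i → entry i j ≤ b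
  row_weak : ∀ i j₁ j₂ : ℕ, i < k → j₁ ≤ j₂ → (j₂ : ℤ) < lam i → entry i j₁ ≤ entry i j₂
  col_strict : ∀ i₁ i₂ j : ℕ, i₁ < i₂ → i₂ < k → (j : ℤ) < lam i₂ → entry i₁ j < entry i₂ j

/-- The monomial `Π_i x_i^{m(i,T)}` of a tableau: the product of `x_{T(c)}` over the
cells `c` of the shape. -/
noncomputable def SSYT.weight {k : ℕ} {lam : ℕ → ℤ} {a b : ℕ} (T : SSYT k lam a b) :
    MvPolynomial ℕ ℤ :=
  ∏ i ∈ Finset.range k, ∏ j ∈ Finset.range (lam i).toNat, MvPolynomial.X (T.entry i j)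

/-- `(lam 0, …, lam (k-1))` is a partition: weakly decreasing with nonnegative entries. -/
def IsPartitionSeq (k : ℕ) (lam : ℕ → ℤ) : Prop :=
  (∀ i, i + 1 < k → lam (i + 1) ≤ lam i) ∧ (∀ i, i < k → 0 ≤ lam i)

/-- The Schur polynomial `s^{[a,b]}_lam = Σ_T Π_i x_i^{m(i,T)}`, the sum running over all
semistandard Young tableaux of shape `lam` with entries in `{a,…,b}`; by convention it is
`0` if `lam` is not a partition. -/
noncomputable def schur (k : ℕ) (lam : ℕ → ℤ) (a b : ℕ) : MvPolynomial ℕ ℤ :=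
  letI := Classical.dec (IsPartitionSeq k lam)
  if IsPartitionSeq k lam then ∑ᶠ T : SSYT k lam a b, T.weight else 0

/-- complete homogeneous symmetric polynomial in `x_{a+1}, …, x_{a+c}` -/
noncomputable def HH (a : ℕ) : ℕ → ℤ → MvPolynomial ℕ ℤ
  | 0, m => if m = 0 then 1 else 0
  | c + 1, m => if m < 0 then 0 else
      ∑ r ∈ Finset.range (m.toNat + 1), MvPolynomial.X (a + c + 1) ^ r * HH a c (m - r)

lemma HH_neg (a c : ℕ) (m : ℤ) (hm : m < 0) : HH a c m = 0 := by
  cases c with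
  | zero => simp [HH, hm.ne]
  | succ c => simp [HH, hm]

lemma HH_rec (a c : ℕ) (m : ℤ) :
    HH a (c + 1) m = HH a c m + MvPolynomial.X (a + c + 1) * HH a (c + 1) (m - 1) := by
  rcases lt_or_ge m 0 with h | h
  · rw [HH_neg _ _ _ h, HH_neg _ _ _ h, HH_neg _ _ _ (by omega)]; simp
  obtain ⟨p, rfl⟩ := Int.eq_ofNat_of_zero_le h
  cases p with
  | zero => simp [HH, HH_neg]
  | succ p =>
    rw [HH, HH, if_neg (by omega), if_neg (by omega)]
    rw [show (((p + 1 : ℕ) : ℤ)).toNat + 1 = (p + 1) + 1 by omega,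
      show (((p + 1 : ℕ) : ℤ) - 1).toNat + 1 = p + 1 by omega, Finset.sum_range_succ',
      Finset.mul_sum, add_comm]
    congr 1
    · simp
    · refine Finset.sum_congr rfl fun r _ => ?_
      rw [show ((p + 1 : ℕ) : ℤ) - ((r + 1 : ℕ) : ℤ) = ((p + 1 : ℕ) : ℤ) - 1 - r by push_cast; ring]
      ring

lemma HH_zero_one (c : ℕ) (m : ℤ) :
    HH 0 (c + 1) m = HH 1 c m + MvPolynomial.X 1 * HH 0 (c + 1) (m - 1) := by
  induction c generalizing m with
  | zero =>
    have := HH_rec 0 0 m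
    simpa [HH] using this
  | succ c ih =>
    rcases lt_or_ge m 0 with h | h
    · rw [HH_neg _ _ _ h, HH_neg _ _ _ h, HH_neg _ _ _ (by omega)]; simp
    obtain ⟨p, rfl⟩ := Int.eq_ofNat_of_zero_le h
    clear h
    induction p with
    | zero =>
      rw [HH_rec, HH_rec 1 c, ih]
      simp [HH_neg]
    | succ p ihp =>
      have e : ((p + 1 : ℕ) : ℤ) - 1 = p := by push_cast; ring
      rw [HH_rec 0 (c + 1), HH_rec 1 c, ih, e,
        show 0 + (c + 1) + 1 = 1 + c + 1 by ring]
      have e2 := ihp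
      have e3 := HH_rec 0 (c + 1) p
      rw [show 0 + (c + 1) + 1 = 1 + c + 1 by ring] at e3
      linear_combination MvPolynomial.X (1 + c + 1) * e2 - MvPolynomial.X 1 * e3

lemma HH_sum (a c : ℕ) (d lo L : ℤ) (h : lo ≤ L) :
    HH a (c + 1) (L + d) =
      ∑ m ∈ Finset.Icc lo L, MvPolynomial.X (a + c + 1) ^ (L - m).toNat * HH a c (m + d) +
      MvPolynomial.X (a + c + 1) ^ (L - lo + 1).toNat * HH a (c + 1) (lo - 1 + d) := by
  induction L, h using Int.leInduction with
  | base =>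
    rw [HH_rec]
    simp
    congr 1; ring
  | succ L hL ih =>
    rw [HH_rec, show L + 1 + d - 1 = L + d by ring, ih]
    have : Finset.Icc lo (L + 1) = insert (L + 1) (Finset.Icc lo L) := by
      ext z; simp; omega
    rw [this, Finset.sum_insert (by simp), mul_add, Finset.mul_sum,
      show (L + 1 - lo + 1).toNat = (L - lo + 1).toNat + 1 by omega]
    rw [← mul_assoc, ← pow_succ', ← add_assoc]
    congr 1
    congr 1
    · simp
    refine Finset.sum_congr rfl fun m hm => ?_
    rw [Finset.mem_Icc] at hm
    rw [show (L + 1 - m).toNat = (L - m).toNat + 1 by omega]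
    ring

/-- lower bound for interlacing -/
def lowB (k : ℕ) (lam : ℕ → ℤ) (i : ℕ) : ℤ := if i + 1 < k then lam (i + 1) else 0

/-- Jacobi-Trudi matrix -/
noncomputable def JT (k : ℕ) (lam : ℕ → ℤ) (a c : ℕ) :
    Matrix (Fin k) (Fin k) (MvPolynomial ℕ ℤ) :=
  Matrix.of fun i j => HH a c (lam i + (- (i : ℤ) + (j : ℤ)))

lemma lowB_le {k : ℕ} {lam : ℕ → ℤ} (h : IsPartitionSeq k lam) (i : ℕ) (hi : i < k) :
    lowB k lam i ≤ lam i := by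
  unfold lowB
  split_ifs with h1
  · exact h.1 i h1
  · exact h.2 i hi

/-- extend a vector by zero -/
def extZ {k : ℕ} (m : Fin k → ℤ) (i : ℕ) : ℤ := if h : i < k then m ⟨i, h⟩ else 0

@[simp] lemma extZ_coe {k : ℕ} (m : Fin k → ℤ) (i : Fin k) : extZ m i = m i := by
  simp [extZ]

lemma det_rows (k : ℕ) (lam : ℕ → ℤ) (a c : ℕ) (h : IsPartitionSeq k lam) :
    (JT k lam a (c + 1)).det = Matrix.det (Matrix.of fun (i j : Fin k) =>
      ∑ m ∈ Finset.Icc (lowB k lam i) (lam i),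
        MvPolynomial.X (a + c + 1) ^ (lam i - m).toNat * HH a c (m + (- (i : ℤ) + (j : ℤ)))) := by
  cases k with
  | zero => simp
  | succ k =>
    rw [← Matrix.det_submatrix_equiv_self Fin.revPerm,
      ← Matrix.det_submatrix_equiv_self Fin.revPerm (Matrix.of _)]
    apply Matrix.det_eq_of_forall_row_eq_smul_add_pred
      (fun i => MvPolynomial.X (a + c + 1) ^
        (lam (i.succ.rev : Fin (k+1)) - lam (i.castSucc.rev : Fin (k+1)) + 1).toNat)
    · intro j
      simp only [JT, Matrix.submatrix_apply, Matrix.of_apply, Fin.revPerm_apply]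
      rw [HH_sum a c _ _ _ (lowB_le h _ (Fin.is_lt _))]
      rw [HH_neg a (c + 1), mul_zero, add_zero]
      simp [lowB]
      try omega
    · intro i j
      simp only [JT, Matrix.submatrix_apply, Matrix.of_apply, Fin.revPerm_apply]
      rw [HH_sum a c _ _ _ (lowB_le h _ (Fin.is_lt _))]
      have := i.is_lt
      have e : lowB (k + 1) lam (i.succ.rev : Fin (k+1)) = lam (i.castSucc.rev : Fin (k+1)) := by
        rw [lowB, if_pos]
        · congr 1
          simp [Fin.val_rev]; omega
        · simp [Fin.val_rev]; omega
      rw [e]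
      congr 3
      simp [Fin.val_rev]
      omega

lemma JT_branch (k : ℕ) (lam : ℕ → ℤ) (a c : ℕ) (h : IsPartitionSeq k lam) :
    (JT k lam a (c + 1)).det =
      ∑ m ∈ Fintype.piFinset (fun i : Fin k => Finset.Icc (lowB k lam i) (lam i)),
        (∏ i : Fin k, MvPolynomial.X (a + c + 1) ^ (lam i - m i).toNat) *
          (JT k (extZ m) a c).det := by
  rw [det_rows k lam a c h]
  have := MultilinearMap.map_sum_finset
    (Matrix.detRowAlternating (n := Fin k) (R := MvPolynomial ℕ ℤ)).toMultilinearMap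
    (α := fun _ => ℤ)
    (fun i m => fun j : Fin k => MvPolynomial.X (a + c + 1) ^ (lam i - m).toNat *
      HH a c (m + (- (i : ℤ) + (j : ℤ))))
    (fun i : Fin k => Finset.Icc (lowB k lam i) (lam i))
  have e : (Matrix.of fun (i j : Fin k) =>
      ∑ m ∈ Finset.Icc (lowB k lam i) (lam i),
        MvPolynomial.X (a + c + 1) ^ (lam i - m).toNat * HH a c (m + (- (i : ℤ) + (j : ℤ)))) =
      fun i : Fin k => ∑ m ∈ Finset.Icc (lowB k lam i) (lam i),
       (fun j : Fin k => MvPolynomial.X (a + c + 1) ^ (lam i - m).toNat *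
      HH a c (m + (- (i : ℤ) + (j : ℤ)))) := by
    ext i j
    simp [Finset.sum_apply]
  rw [e]
  refine this.trans (Finset.sum_congr rfl fun m _ => ?_)
  rw [← Matrix.det_mul_column]
  change Matrix.det _ = _
  congr 1
  ext i j
  simp [JT]
lemma SSYT.ext' {k : ℕ} {lam : ℕ → ℤ} {a b : ℕ} {S T : SSYT k lam a b}
    (h : S.entry = T.entry) : S = T := by
  cases S; cases T; simp at h; subst h; rfl

lemma part_anti {k : ℕ} {lam : ℕ → ℤ} (h : ∀ i, i + 1 < k → lam (i + 1) ≤ lam i)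
    (i j : ℕ) (hij : i ≤ j) (hj : j < k) : lam j ≤ lam i := by
  induction j, hij using Nat.le_induction with
  | base => exact le_rfl
  | succ j hj' ih => exact (h j hj).trans (ih (by omega))

instance SSYT.finite (k : ℕ) (lam : ℕ → ℤ) (a b : ℕ) : Finite (SSYT k lam a b) := by
  let f : SSYT k lam a b → ((i : Fin k) → Fin (lam i).toNat → Fin (b + 1)) :=
    fun T i j => ⟨T.entry i j, by
      have := T.upper i j i.2 (by have := j.2; omega)
      omega⟩
  apply Finite.of_injective f
  intro S T hST
  apply SSYT.ext'
  funext i j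
  by_cases h : i < k ∧ (j : ℤ) < lam i
  · have := congrFun (congrFun hST ⟨i, h.1⟩) ⟨j, by have := h.2; simp only []; omega⟩
    simpa [f] using this
  · rw [S.zero_outside i j h, T.zero_outside i j h]

lemma downset_cut (p : ℕ → Prop) (L : ℕ) (hp : ∀ i j, i ≤ j → j < L → p j → p i) :
    ∃ m ≤ L, ∀ j < L, (p j ↔ j < m) := by
  induction L with
  | zero => exact ⟨0, le_rfl, by simp⟩
  | succ L ih =>
    by_cases h : p L
    · exact ⟨L + 1, le_rfl, fun j hj => ⟨fun _ => hj, fun _ => hp j L (by omega) (by omega) h⟩⟩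
    · obtain ⟨m, hm, h2⟩ := ih fun i j hij hj => hp i j hij (by omega)
      refine ⟨m, by omega, fun j hj => ?_⟩
      rcases Nat.lt_succ_iff_lt_or_eq.1 hj with h3 | rfl
      · exact h2 j h3
      · exact ⟨fun h' => absurd h' h, fun h' => by omega⟩

abbrev Interl (k : ℕ) (lam : ℕ → ℤ) : Type :=
  {m : Fin k → ℤ // m ∈ Fintype.piFinset (fun i : Fin k => Finset.Icc (lowB k lam i) (lam i))}

lemma Interl.lo {k : ℕ} {lam : ℕ → ℤ} (m : Interl k lam) (i : ℕ) (hi : i < k) :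
    lowB k lam i ≤ extZ m.1 i := by
  have := (Finset.mem_Icc.1 (Fintype.mem_piFinset.1 m.2 ⟨i, hi⟩)).1
  simpa [extZ, hi] using this

lemma Interl.hi {k : ℕ} {lam : ℕ → ℤ} (m : Interl k lam) (i : ℕ) (hi : i < k) :
    extZ m.1 i ≤ lam i := by
  have := (Finset.mem_Icc.1 (Fintype.mem_piFinset.1 m.2 ⟨i, hi⟩)).2
  simpa [extZ, hi] using this

lemma Interl.part {k : ℕ} {lam : ℕ → ℤ} (h : IsPartitionSeq k lam) (m : Interl k lam) :
    IsPartitionSeq k (extZ m.1) := by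
  constructor
  · intro i hi
    refine (m.hi (i + 1) hi).trans ?_
    have := m.lo i (by omega)
    rwa [lowB, if_pos hi] at this
  · intro i hi
    have := m.lo i hi
    rw [lowB] at this
    split_ifs at this with h1
    · exact (h.2 _ h1).trans this
    · exact this

/-- glue -/
noncomputable def glue {k : ℕ} {lam : ℕ → ℤ} {a b : ℕ} (hab : a ≤ b + 1)
    (h : IsPartitionSeq k lam)
    (p : Σ m : Interl k lam, SSYT k (extZ m.1) a b) : SSYT k lam a (b + 1) where
  entry i j := if i < k ∧ (j : ℤ) < lam i then
    (if (j : ℤ) < extZ p.1.1 i then p.2.entry i j else b + 1) else 0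
  zero_outside i j hij := if_neg hij
  lower i j hi hj := by
    rw [if_pos ⟨hi, hj⟩]
    split_ifs with h1
    · exact p.2.lower i j hi h1
    · exact hab
  upper i j hi hj := by
    rw [if_pos ⟨hi, hj⟩]
    split_ifs with h1
    · exact (p.2.upper i j hi h1).trans (by omega)
    · exact le_rfl
  row_weak i j₁ j₂ hi hj h2 := by
    have h2' : (j₁ : ℤ) < lam i := by omega
    rw [if_pos (And.intro hi h2), if_pos (And.intro hi h2')]
    by_cases h1 : (j₂ : ℤ) < extZ p.1.1 i
    · rw [if_pos h1, if_pos (by omega)]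
      exact p.2.row_weak i j₁ j₂ hi hj h1
    · rw [if_neg h1]
      split_ifs with h3
      · exact (p.2.upper i j₁ hi h3).trans (by omega)
      · exact le_rfl
  col_strict i₁ i₂ j hi h2 hj := by
    have hl := part_anti h.1 i₁ i₂ hi.le h2
    have h2' : i₁ < k := by omega
    have hj' : (j : ℤ) < lam i₁ := by omega
    rw [if_pos (And.intro h2 hj), if_pos (And.intro h2' hj')]
    have hm := p.1.lo i₁ (by omega)
    rw [lowB, if_pos (by omega)] at hm
    have hl2 := part_anti h.1 (i₁ + 1) i₂ hi h2
    have h3 : (j : ℤ) < extZ p.1.1 i₁ := by omega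
    rw [if_pos h3]
    split_ifs with h1
    · exact p.2.col_strict i₁ i₂ j hi h2 h1
    · have := p.2.upper i₁ j (by omega) h3
      omega

lemma glue_le {k : ℕ} {lam : ℕ → ℤ} {a b : ℕ} (hab : a ≤ b + 1)
    (h : IsPartitionSeq k lam)
    (p : Σ m : Interl k lam, SSYT k (extZ m.1) a b) (i j : ℕ) (hi : i < k)
    (hj : (j : ℤ) < lam i) : (glue hab h p).entry i j ≤ b ↔ (j : ℤ) < extZ p.1.1 i := by
  simp only [glue, if_pos (And.intro hi hj)]
  split_ifs with h1
  · exact ⟨fun _ => h1, fun _ => p.2.upper i j hi h1⟩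
  · simp [h1]

lemma glue_inj {k : ℕ} {lam : ℕ → ℤ} {a b : ℕ} (hab : a ≤ b + 1)
    (h : IsPartitionSeq k lam) : Function.Injective (glue (a := a) (b := b) hab h) := by
  rintro ⟨m, S⟩ ⟨m', S'⟩ hp
  have hm : m = m' := by
    apply Subtype.ext
    funext i
    have h0 := (m.part h).2 i i.2
    have h0' := (m'.part h).2 i i.2
    have h1 := m.hi i i.2
    have h1' := m'.hi i i.2
    have key : ∀ j : ℕ, (j : ℤ) < lam i → ((j : ℤ) < extZ m.1 i ↔ (j : ℤ) < extZ m'.1 i) := by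
      intro j hj
      rw [← glue_le hab h ⟨m, S⟩ i j i.2 hj, ← glue_le hab h ⟨m', S'⟩ i j i.2 hj, hp]
    have k1 := key (extZ m.1 i).toNat
    have k2 := key (extZ m'.1 i).toNat
    rw [extZ_coe] at *
    rw [extZ_coe] at *
    omega
  subst hm
  congr 1
  apply SSYT.ext'
  funext i j
  by_cases hij : i < k ∧ (j : ℤ) < extZ m.1 i
  · have := congrArg (fun T => T.entry i j) hp
    have h1 := m.hi i hij.1
    simpa [glue, hij.1, hij.2, hij.2.trans_le h1] using this
  · rw [S.zero_outside i j hij, S'.zero_outside i j hij]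

lemma glue_surj {k : ℕ} {lam : ℕ → ℤ} {a b : ℕ} (hab : a ≤ b + 1)
    (h : IsPartitionSeq k lam) : Function.Surjective (glue (a := a) (b := b) hab h) := by
  intro T
  have hc : ∀ i : Fin k, ∃ m ≤ (lam i).toNat, ∀ j < (lam i).toNat, (T.entry i j ≤ b ↔ j < m) := by
    intro i
    apply downset_cut
    intro j₁ j₂ hj h2 h3
    exact (T.row_weak i j₁ j₂ i.2 hj (by omega)).trans h3
  choose m hm1 hm2 using hc
  have hmem : (fun i => (m i : ℤ)) ∈
      Fintype.piFinset (fun i : Fin k => Finset.Icc (lowB k lam i) (lam i)) := by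
    rw [Fintype.mem_piFinset]
    intro i
    have h0 := h.2 i i.2
    have h1 := hm1 i
    rw [Finset.mem_Icc]
    refine ⟨?_, by omega⟩
    rw [lowB]
    split_ifs with hi
    · by_contra hcon
      have h2 := h.1 i hi
      have h3 := T.col_strict i (i + 1) (m i) (by omega) hi (by omega)
      have h4 := T.upper (i + 1) (m i) hi (by omega)
      have h5 := (hm2 i (m i) (by omega)).1 (by omega)
      omega
    · omega
  let M : Interl k lam := ⟨_, hmem⟩
  have hM : ∀ i : Fin k, extZ M.1 i = m i := fun i => by simp [M]
  have hT : ∀ i j : ℕ, i < k → (j : ℤ) < lam i → (T.entry i j ≤ b ↔ (j : ℤ) < extZ M.1 i) := by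
    intro i j hi hj
    rw [hM ⟨i, hi⟩, hm2 ⟨i, hi⟩ j (by simp only []; omega)]
    omega
  have hP := M.part h
  refine ⟨⟨M, ⟨fun i j => if i < k ∧ (j : ℤ) < extZ M.1 i then T.entry i j else 0,
    fun i j hij => if_neg hij, ?_, ?_, ?_, ?_⟩⟩, ?_⟩
  · intro i j hi hj
    rw [if_pos ⟨hi, hj⟩]
    exact T.lower i j hi (hj.trans_le (M.hi i hi))
  · intro i j hi hj
    rw [if_pos ⟨hi, hj⟩]
    exact (hT i j hi (hj.trans_le (M.hi i hi))).2 hj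
  · intro i j₁ j₂ hi hj h2
    have h2' : (j₁ : ℤ) < extZ M.1 i := by omega
    rw [if_pos (And.intro hi h2), if_pos (And.intro hi h2')]
    exact T.row_weak i j₁ j₂ hi hj (h2.trans_le (M.hi i hi))
  · intro i₁ i₂ j hi h2 hj
    have hl := part_anti hP.1 i₁ i₂ hi.le h2
    have h2' : i₁ < k := by omega
    have hj' : (j : ℤ) < extZ M.1 i₁ := by omega
    rw [if_pos (And.intro h2 hj), if_pos (And.intro h2' hj')]
    exact T.col_strict i₁ i₂ j hi h2 (hj.trans_le (M.hi i₂ h2))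
  · apply SSYT.ext'
    funext i j
    by_cases hij : i < k ∧ (j : ℤ) < lam i
    · simp only [glue, if_pos hij]
      have := hT i j hij.1 hij.2
      have hu := T.upper i j hij.1 hij.2
      split_ifs with h1 h2
      · rfl
      · exact absurd ⟨hij.1, h1⟩ h2
      · omega
    · rw [T.zero_outside i j hij]
      simp only [glue, if_neg hij]

lemma glue_weight {k : ℕ} {lam : ℕ → ℤ} {a b : ℕ} (hab : a ≤ b + 1)
    (h : IsPartitionSeq k lam)
    (p : Σ m : Interl k lam, SSYT k (extZ m.1) a b) :
    (glue hab h p).weight =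
      (∏ i : Fin k, MvPolynomial.X (b + 1) ^ (lam i - p.1.1 i).toNat) * p.2.weight := by
  rw [SSYT.weight, SSYT.weight, ← Fin.prod_univ_eq_prod_range
    (fun i => ∏ j ∈ Finset.range (lam i).toNat, MvPolynomial.X ((glue hab h p).entry i j)),
    ← Fin.prod_univ_eq_prod_range (fun i => ∏ j ∈ Finset.range (extZ p.1.1 i).toNat,
      MvPolynomial.X (p.2.entry i j)), ← Finset.prod_mul_distrib]
  refine Finset.prod_congr rfl fun i _ => ?_
  have h1 := p.1.hi i i.2
  have h0 := (p.1.part h).2 i i.2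
  have e : (lam i).toNat = (extZ p.1.1 i).toNat + (lam i - p.1.1 i).toNat := by
    rw [extZ_coe] at *
    omega
  rw [e, Finset.prod_range_add, mul_comm]
  congr 1
  · rw [← Finset.card_range (lam i - p.1.1 i).toNat, ← Finset.prod_const, Finset.card_range]
    refine Finset.prod_congr rfl fun j hj => ?_
    rw [Finset.mem_range] at hj
    simp only [glue]
    rw [if_pos ⟨i.2, by omega⟩, if_neg (by omega)]
  · refine Finset.prod_congr rfl fun j hj => ?_
    rw [Finset.mem_range] at hj
    simp only [glue]
    rw [if_pos ⟨i.2, by omega⟩, if_pos (by omega)]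

lemma schur_branch (k : ℕ) (lam : ℕ → ℤ) (a b : ℕ) (hab : a ≤ b + 1) (h : IsPartitionSeq k lam) :
    schur k lam a (b + 1) =
      ∑ m ∈ Fintype.piFinset (fun i : Fin k => Finset.Icc (lowB k lam i) (lam i)),
        (∏ i : Fin k, MvPolynomial.X (b + 1) ^ (lam i - m i).toNat) *
          schur k (extZ m) a b := by
  classical
  have : ∀ lam : ℕ → ℤ, ∀ b, Fintype (SSYT k lam a b) := fun _ _ => Fintype.ofFinite _
  rw [schur, if_pos h, finsum_eq_sum_of_fintype]
  rw [← Finset.sum_coe_sort (Fintype.piFinset _)]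
  have e := Equiv.sum_comp (Equiv.ofBijective _ ⟨glue_inj (a := a) (b := b) hab h, glue_surj hab h⟩)
    (fun T : SSYT k lam a (b + 1) => T.weight)
  rw [← e, Fintype.sum_sigma]
  refine Finset.sum_congr rfl fun m _ => ?_
  rw [schur, if_pos (Interl.part h m), finsum_eq_sum_of_fintype, Finset.mul_sum]
  refine Finset.sum_congr rfl fun S _ => ?_
  exact glue_weight hab h ⟨m, S⟩

lemma schur_base (k : ℕ) (lam : ℕ → ℤ) (a : ℕ) (h : IsPartitionSeq k lam) :
    schur k lam (a + 1) a = (JT k lam a 0).det := by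
  classical
  have : Fintype (SSYT k lam (a + 1) a) := Fintype.ofFinite _
  rw [schur, if_pos h, finsum_eq_sum_of_fintype]
  by_cases hz : ∀ i < k, lam i = 0
  · have hJ : JT k lam a 0 = 1 := by
      ext1 i j
      rw [JT, Matrix.of_apply, hz i i.2, HH, Matrix.one_apply]
      congr 1
      rw [Fin.ext_iff]
      simp; omega
    rw [hJ, Matrix.det_one]
    let S : SSYT k lam (a + 1) a := ⟨fun _ _ => 0, fun _ _ _ => rfl,
      fun i j hi hj => by have := hz i hi; omega, fun i j hi hj => by have := hz i hi; omega,
      fun i j j' hi hj hj' => by have := hz i hi; omega,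
      fun i i' j hi hi' hj' => by have := hz i' hi'; omega⟩
    have hS : ∀ T, T = S := by
      intro T
      apply SSYT.ext'
      funext i j
      rw [T.zero_outside]
      rintro ⟨hi, hj⟩
      have := hz i hi; omega
    have : Unique (SSYT k lam (a + 1) a) := ⟨⟨S⟩, hS⟩
    rw [Fintype.sum_unique, SSYT.weight]
    apply Finset.prod_eq_one
    intro i hi
    rw [hz i (Finset.mem_range.1 hi)]
    simp
  · push Not at hz
    obtain ⟨i, hi, hne⟩ := hz
    have h0 := h.2 i hi
    have hpos : 0 < lam 0 := by
      have := part_anti h.1 0 i (by omega) hi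
      omega
    have : IsEmpty (SSYT k lam (a + 1) a) := ⟨fun T => by
      have h1 := T.lower 0 0 (by omega) (by simpa using hpos)
      have h2 := T.upper 0 0 (by omega) (by simpa using hpos)
      omega⟩
    rw [Fintype.sum_empty, Matrix.det_eq_zero_of_row_eq_zero ⟨0, by omega⟩]
    intro j
    rw [JT, Matrix.of_apply, HH, if_neg]
    simp; omega

theorem jacobi_trudi (k a c : ℕ) (lam : ℕ → ℤ) (h : IsPartitionSeq k lam) :
    schur k lam (a + 1) (a + c) = (JT k lam a c).det := by
  induction c generalizing lam with
  | zero => exact schur_base k lam a h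
  | succ c ih =>
    rw [← add_assoc, schur_branch k lam (a + 1) (a + c) (by omega) h, JT_branch k lam a c h]
    refine Finset.sum_congr rfl fun m hm => ?_
    rw [ih _ (Interl.part h ⟨m, hm⟩)]
lemma plucker_s11 {R : Type*} [CommRing R] (m : ℕ) (A C : Matrix (Fin (m + 2)) (Fin (m + 2)) R)
    (V : Fin (m + 2) → R) (t : Fin (m + 2)) (hC0 : ∀ i, C i 0 = V i)
    (hCs : ∀ i (j : Fin (m + 1)), C i j.succ = A i j.castSucc) :
    A.det * ((A.submatrix t.succAbove Fin.castSucc).updateCol 0 (fun i => V (t.succAbove i))).det =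
      (A.updateCol 0 V).det * (A.submatrix t.succAbove Fin.castSucc).det -
        C.det * (A.submatrix t.succAbove Fin.succ).det := by
  set B := A.submatrix t.succAbove Fin.castSucc with hB
  let L : (Fin (m + 2) → R) →ₗ[R] R :=
    (LinearMap.proj (0 : Fin (m + 1))).comp (B.cramer.comp (LinearMap.funLeft R R t.succAbove))
  have hL : ∀ u, L u = (B.updateCol 0 (fun i => u (t.succAbove i))).det := by
    intro u
    simp only [L, LinearMap.comp_apply, LinearMap.proj_apply, Matrix.cramer_apply]
    rfl
  have hcr : A.det • V = ∑ j, (A.updateCol j V).det • (fun i => A i j) := by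
    rw [← Matrix.mulVec_cramer]
    ext i
    simp [Matrix.mulVec, dotProduct, Matrix.cramer_apply, Finset.sum_apply, mul_comm]
  have h1 := congrArg L hcr
  rw [map_smul, map_sum, Fin.sum_univ_succ, Fin.sum_univ_castSucc] at h1
  simp only [LinearMap.map_smul] at h1
  simp only [hL, smul_eq_mul] at h1
  have hz : ∀ j : Fin m, (B.updateCol 0 (fun i => A (t.succAbove i) j.castSucc.succ)).det = 0 := by
    intro j
    apply Matrix.det_zero_of_column_eq (i := 0) (j := j.succ) (Fin.succ_ne_zero j).symm
    intro i
    rw [Matrix.updateCol_self, Matrix.updateCol_ne (Fin.succ_ne_zero j)]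
    simp [hB]
  have h0 : B.updateCol 0 (fun i => A (t.succAbove i) 0) = B := by
    ext i j
    rw [Matrix.updateCol_apply]
    split_ifs with h
    · subst h; simp [hB]
    · rfl
  have hC : (A.updateCol (Fin.last (m + 1)) V).det = (-1) ^ (m + 1) * C.det := by
    have := Matrix.det_permute' (finRotate (m + 2)) C
    rw [sign_finRotate] at this
    simp only [Nat.add_one_sub_one] at this
    rw [show A.updateCol (Fin.last (m + 1)) V = C.submatrix id (finRotate (m + 2)) from ?_, this]
    · push_cast; rfl
    · ext i j
      refine Fin.lastCases ?_ (fun j => ?_) j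
      · simp [hC0]
      · rw [Matrix.updateCol_ne (Fin.castSucc_lt_last j).ne, Matrix.submatrix_apply, ← hCs]
        simp
  have hN : (A.submatrix t.succAbove Fin.succ).det =
      (-1) ^ m * (B.updateCol 0 (fun i => A (t.succAbove i) (Fin.last m).succ)).det := by
    have := Matrix.det_permute' (finRotate (m + 1))
      (B.updateCol 0 (fun i => A (t.succAbove i) (Fin.last m).succ))
    rw [sign_finRotate] at this
    simp only [Nat.add_one_sub_one] at this
    rw [show A.submatrix t.succAbove Fin.succ = Matrix.submatrix
      (B.updateCol 0 (fun i => A (t.succAbove i) (Fin.last m).succ)) id (finRotate (m + 1)) from ?_,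
      this]
    · push_cast; rfl
    · ext i j
      cases m with
      | zero =>
        have : j = 0 := by omega
        subst this
        simp
      | succ m =>
      refine Fin.lastCases ?_ (fun j => ?_) j
      · simp
      · have e : finRotate (m + 2) j.castSucc = j.succ := by
          simp
        rw [Matrix.submatrix_apply, Matrix.submatrix_apply, e,
          Matrix.updateCol_ne (Fin.succ_ne_zero j)]
        simp [hB]
  simp only [hz, mul_zero, Finset.sum_const_zero, zero_add] at h1
  rw [h0, Fin.succ_last, hC] at h1
  rw [h1, hN, Fin.succ_last]
  have : ((-1 : R)) ^ m * (-1) ^ m = 1 := by rw [← mul_pow]; simp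
  linear_combination (0 : R) * this

lemma JT_first (k : ℕ) (lam : ℕ → ℤ) (c : ℕ) :
    (JT (k + 1) lam 0 (c + 1)).det =
      ((JT (k + 1) lam 1 c).updateCol 0 (fun i => HH 0 (c + 1) (lam i - i))).det := by
  apply Matrix.det_eq_of_forall_col_eq_smul_add_pred (fun _ => MvPolynomial.X 1)
  · intro i
    simp [JT, sub_eq_add_neg]
  · intro i j
    rw [Matrix.updateCol_ne (Fin.succ_ne_zero j)]
    simp only [JT, Matrix.of_apply]
    rw [HH_zero_one]
    congr 3
    simp
    ring

/-- for a partition `λ = (λ_1 ≥ … ≥ λ_k ≥ 1)`, `0 ≤ t ≤ k-1` and `n ≥ k`,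
with `μ = (λ_1,…,λ_t,λ_{t+2}-1,…,λ_k-1)`, `ν = (λ_1+1,…,λ_t+1,λ_{t+2},…,λ_k)` and
`ρ = (λ_1-1,…,λ_k-1)`:
`s^{[n]}_λ · s^{[2,n]}_μ = s^{[2,n]}_λ · s^{[n]}_μ + x_1 · s^{[n]}_ρ · s^{[2,n]}_ν`. -/
theorem stmt_11 (k t n : ℕ) (hk : 1 ≤ k) (ht : t ≤ k - 1) (hn : k ≤ n) (lam : ℕ → ℤ)
    (hdec : ∀ i, i + 1 < k → lam (i + 1) ≤ lam i) (hpos : ∀ i, i < k → 1 ≤ lam i) :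
    schur k lam 1 n *
        schur (k - 1) (fun j => if j < t then lam j else lam (j + 1) - 1) 2 n =
      schur k lam 2 n *
          schur (k - 1) (fun j => if j < t then lam j else lam (j + 1) - 1) 1 n +
        MvPolynomial.X 1 * schur k (fun j => lam j - 1) 1 n *
          schur (k - 1) (fun j => if j < t then lam j + 1 else lam (j + 1)) 2 n := by
  obtain ⟨k, rfl⟩ : ∃ k', k = k' + 1 := ⟨k - 1, by omega⟩
  obtain ⟨c, rfl⟩ : ∃ c, n = c + 1 := ⟨n - 1, by omega⟩
  simp only [Nat.add_sub_cancel] at *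
  have hanti := part_anti hdec
  have P1 : IsPartitionSeq (k + 1) lam := ⟨hdec, fun i hi => by have := hpos i hi; omega⟩
  have P2 : IsPartitionSeq k (fun j => if j < t then lam j else lam (j + 1) - 1) := by
    constructor
    · intro i hi
      have h1 := hdec i (by omega)
      have h2 := hdec (i + 1) (by omega)
      simp only []
      split_ifs <;> omega
    · intro i hi
      have h1 := hpos i (by omega)
      have h2 := hpos (i + 1) (by omega)
      simp only []
      split_ifs <;> omega
  have P3 : IsPartitionSeq k (fun j => if j < t then lam j + 1 else lam (j + 1)) := by
    constructor
    · intro i hi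
      have h1 := hdec i (by omega)
      have h2 := hdec (i + 1) (by omega)
      simp only []
      split_ifs <;> omega
    · intro i hi
      have h1 := hpos i (by omega)
      have h2 := hpos (i + 1) (by omega)
      simp only []
      split_ifs <;> omega
  have P4 : IsPartitionSeq (k + 1) (fun j => lam j - 1) :=
    ⟨fun i hi => by have := hdec i hi; simp only []; omega,
     fun i hi => by have := hpos i hi; simp only []; omega⟩
  have J1 : ∀ k lam, IsPartitionSeq k lam → schur k lam 1 (c + 1) = (JT k lam 0 (c + 1)).det := by
    intro k lam h
    have := jacobi_trudi k 0 (c + 1) lam h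
    simpa using this
  have J2 : ∀ k lam, IsPartitionSeq k lam → schur k lam 2 (c + 1) = (JT k lam 1 c).det := by
    intro k lam h
    have := jacobi_trudi k 1 c lam h
    rwa [add_comm 1 c] at this
  rw [J1 _ _ P1, J1 _ _ P2, J1 _ _ P4, J2 _ _ P1, J2 _ _ P2, J2 _ _ P3]
  cases k with
  | zero =>
    simp only [Matrix.det_fin_zero, Matrix.det_fin_one, JT, Matrix.of_apply]
    have := HH_zero_one c (lam 0)
    simpa using this
  | succ m =>
    set A := JT (m + 2) lam 1 c with hA
    let T : Fin (m + 2) := ⟨t, by omega⟩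
    let V : Fin (m + 2) → MvPolynomial ℕ ℤ := fun i => HH 0 (c + 1) (lam i - i)
    have hsa : ∀ i : Fin (m + 1), ((T.succAbove i : Fin (m + 2)) : ℕ) =
        if (i : ℕ) < t then (i : ℕ) else i + 1 := by
      intro i
      simp only [Fin.succAbove, T, Fin.lt_def, Fin.val_castSucc]
      split_ifs <;> simp
    have hmu : JT (m + 1) (fun j => if j < t then lam j else lam (j + 1) - 1) 1 c =
        A.submatrix T.succAbove Fin.castSucc := by
      ext1 i j
      simp only [hA, JT, Matrix.submatrix_apply, Matrix.of_apply, hsa]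
      congr 1
      split_ifs <;> simp <;> ring
    have hnu : JT (m + 1) (fun j => if j < t then lam j + 1 else lam (j + 1)) 1 c =
        A.submatrix T.succAbove Fin.succ := by
      ext1 i j
      simp only [hA, JT, Matrix.submatrix_apply, Matrix.of_apply, hsa]
      congr 1
      split_ifs <;> simp <;> ring
    have hV : (fun i : Fin (m + 1) => HH 0 (c + 1)
        ((fun j => if j < t then lam j else lam (j + 1) - 1) (i : ℕ) - (i : ℤ))) =
        fun i => V (T.succAbove i) := by
      funext i
      simp only [V, hsa]
      congr 1
      split_ifs <;> simp <;> ring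
    rw [JT_first (m + 1) lam, JT_first m, JT_first (m + 1) (fun j => lam j - 1), hmu, hnu, hV]
    set D := JT (m + 2) (fun j => lam j - 1) 1 c with hD
    have hDs : ∀ i (j : Fin (m + 1)), D i j.succ = A i j.castSucc := by
      intro i j
      simp only [hA, hD, JT, Matrix.of_apply]
      congr 1
      simp; ring
    have hpl := plucker_s11 m A (D.updateCol 0 V) V T (fun i => by simp) (fun i j => by
      rw [Matrix.updateCol_ne (Fin.succ_ne_zero j)]
      exact hDs i j)
    have hdet : (D.updateCol 0 V).det = MvPolynomial.X 1 *
        (D.updateCol 0 (fun i => HH 0 (c + 1) (lam i - 1 - i))).det := by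
      have e : V = (fun i => A i 0) +
          (MvPolynomial.X 1 : MvPolynomial ℕ ℤ) • (fun i : Fin (m + 2) => HH 0 (c + 1) (lam i - 1 - i)) := by
        funext i
        simp only [V, Pi.add_apply, Pi.smul_apply, smul_eq_mul, hA, JT, Matrix.of_apply]
        rw [HH_zero_one]
        congr 2
        · simp; ring
        · congr 1; ring
      rw [e, Matrix.det_updateCol_add, Matrix.det_updateCol_smul]
      rw [Matrix.det_zero_of_column_eq (i := 0) (j := 1) (by simp), zero_add]
      intro i
      rw [Matrix.updateCol_self, Matrix.updateCol_ne (by simp)]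
      exact (hDs i 0).symm
    rw [hdet] at hpl
    linear_combination -hpl
end
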